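/- Let f : 𝔽₂ⁿ → {1,−1} be a Boolean function with Fourier sparsity s ≥ 1, let γ₁,…,γ_d be linearly independent linear forms with 𝔽₂-span H, and let l be the number of cosets of H in the dual space of 𝔽₂ⁿ that have nonempty intersection with Supp(f̂). Then the average over uniformly random b ∈ 𝔽₂^d of the Fourier sparsity of the restriction of f to V_b = {x : γ₁(x)=b₁,…,γ_d(x)=b_d} is at least l²/s; i.e., 2^{−d} Σ_{b ∈ 𝔽₂^d} spar(f|_{V_b}) ≥ l²/s. -/

import Mathlib

/-!
The coefficient of `f|_{V_b}` at the restriction of a form `χ` is, up to a sign and a power of two,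
`F_χ(b) = Σ_{x ∈ V_b} f(x) (-1)^{χ(x)}` (`sliceSum`).  As a function of `b ∈ 𝔽₂^d`, `F_χ` has
Fourier transform `a ↦ 2ⁿ f̂(χ + Σ aᵢ γᵢ)` (`sum_sliceSum_mul_sgn`), so the size of its Fourier
support is the number `s_C` of elements of `Supp(f̂)` in the coset `C = χ + H`.
By the uncertainty principle `|supp F| · |supp F̂| ≥ 2^d` (`uncertainty`), a coset `C` meeting the
support satisfies `F_χ(b) ≠ 0` for at least `2^d / s_C` values of `b`.  Forms in distinct cosets
of `H` have distinct restrictions to `V_b`, since a form that vanishes on the common kernel of the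
`γᵢ` lies in `H`.  The average sparsity is therefore at least `Σ_C 1 / s_C`, and `Σ_C s_C = s`, so
Cauchy–Schwarz gives the bound `l² / s`.
-/

/-- The dual space of `𝔽₂ⁿ`: linear forms `𝔽₂ⁿ → 𝔽₂`. -/
abbrev DualF (n : ℕ) : Type := (Fin n → ZMod 2) →ₗ[ZMod 2] ZMod 2

/-- A Boolean function takes values in `{1, -1} ⊆ ℝ`. -/
def IsBooleanFn (n : ℕ) (f : (Fin n → ZMod 2) → ℝ) : Prop :=
  ∀ x, f x = 1 ∨ f x = -1

/-- Fourier coefficient `f̂(γ) = 2⁻ⁿ Σ_x f(x) (-1)^(γ x)`. -/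
noncomputable def fCoeff (n : ℕ) (f : (Fin n → ZMod 2) → ℝ) (γ : DualF n) : ℝ :=
  (2 ^ n : ℝ)⁻¹ * ∑ x : Fin n → ZMod 2, f x * (-1 : ℝ) ^ (γ x).val

/-- Fourier support. -/
noncomputable def fSupp (n : ℕ) (f : (Fin n → ZMod 2) → ℝ) : Set (DualF n) :=
  {γ | fCoeff n f γ ≠ 0}

/-- Fourier sparsity. -/
noncomputable def fSpar (n : ℕ) (f : (Fin n → ZMod 2) → ℝ) : ℕ :=
  (fSupp n f).ncard

/-- Fourier dimension: dimension of the 𝔽₂-span of the Fourier support. -/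
noncomputable def fDim (n : ℕ) (f : (Fin n → ZMod 2) → ℝ) : ℕ :=
  Module.finrank (ZMod 2) (Submodule.span (ZMod 2) (fSupp n f))

/-- `P` is an (injective) affine-linear parametrization of the affine subspace
`{x : γ₁ x = b₁, …, γ_d x = b_d}` by `𝔽₂^(n-d)`. -/
def IsAffineParam (n d : ℕ) (γ : Fin d → DualF n) (b : Fin d → ZMod 2)
    (P : (Fin (n - d) → ZMod 2) → (Fin n → ZMod 2)) : Prop :=
  (∃ (L : (Fin (n - d) → ZMod 2) →ₗ[ZMod 2] (Fin n → ZMod 2)) (x₀ : Fin n → ZMod 2),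
      P = fun y => x₀ + L y) ∧
  Function.Injective P ∧
  Set.range P = {x | ∀ i, γ i x = b i}

/-! ### Fourier analysis and the uncertainty principle on `𝔽₂^d` -/

/-- The character `(-1)^z` of `𝔽₂`, with real values. -/
noncomputable def sgn (z : ZMod 2) : ℝ := (-1 : ℝ) ^ z.val

lemma zmod_two_cases (z : ZMod 2) : z = 0 ∨ z = 1 := by
  decide +revert

lemma sgn_add (a b : ZMod 2) : sgn (a + b) = sgn a * sgn b := by
  rcases zmod_two_cases a with rfl | rfl <;> rcases zmod_two_cases b with rfl | rfl <;>
    simp [sgn, ZMod.val_one, show (1 + 1 : ZMod 2) = 0 from rfl]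

lemma sgn_zero : sgn 0 = 1 := by simp [sgn]

lemma abs_sgn (a : ZMod 2) : |sgn a| = 1 := by simp [sgn]

lemma sgn_ne_zero (a : ZMod 2) : sgn a ≠ 0 := by simp [sgn]

lemma sgn_sum {ι : Type*} (t : Finset ι) (g : ι → ZMod 2) :
    sgn (∑ i ∈ t, g i) = ∏ i ∈ t, sgn (g i) := by
  classical
  induction t using Finset.induction_on with
  | empty => simp [sgn_zero]
  | insert i t hi ih => rw [Finset.sum_insert hi, Finset.prod_insert hi, sgn_add, ih]

/-- Orthogonality of the characters of `𝔽₂^d`. -/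
lemma sum_sgn_dot (d : ℕ) (c : Fin d → ZMod 2) :
    ∑ a : Fin d → ZMod 2, sgn (∑ i, a i * c i) = if c = 0 then (2 : ℝ) ^ d else 0 := by
  have h1 : ∀ z : ZMod 2, ∑ y : ZMod 2, sgn (y * z) = if z = 0 then (2 : ℝ) else 0 := by
    intro z
    have : (Finset.univ : Finset (ZMod 2)) = {0, 1} := rfl
    rw [this, Finset.sum_pair (by decide)]
    rcases zmod_two_cases z with rfl | rfl
    · norm_num [sgn]
    · norm_num [sgn, ZMod.val_one]
  simp_rw [sgn_sum]
  rw [← Fintype.prod_sum (fun i y => sgn (y * c i))]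
  simp_rw [h1]
  split_ifs with hc
  · simp [hc]
  · obtain ⟨i, hi⟩ := Function.ne_iff.mp hc
    exact Finset.prod_eq_zero (Finset.mem_univ i) (if_neg hi)

/-- The unnormalised Fourier transform on `𝔽₂^d`. -/
noncomputable def hatF (d : ℕ) (F : (Fin d → ZMod 2) → ℝ) (a : Fin d → ZMod 2) : ℝ :=
  ∑ b, F b * sgn (∑ i, a i * b i)

lemma hatF_inversion (d : ℕ) (F : (Fin d → ZMod 2) → ℝ) (c : Fin d → ZMod 2) :
    ∑ a, hatF d F a * sgn (∑ i, a i * c i) = 2 ^ d * F c := by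
  unfold hatF
  simp_rw [Finset.sum_mul]
  rw [Finset.sum_comm]
  have : ∀ b : Fin d → ZMod 2,
      ∑ a : Fin d → ZMod 2, F b * sgn (∑ i, a i * b i) * sgn (∑ i, a i * c i)
        = F b * (if b = c then (2 : ℝ) ^ d else 0) := by
    intro b
    simp_rw [mul_assoc, ← Finset.mul_sum, ← sgn_add, ← Finset.sum_add_distrib, ← mul_add]
    have h := sum_sgn_dot d (b + c)
    simp only [Pi.add_apply] at h
    rw [h]
    congr 2
    simp only [funext_iff, Pi.add_apply, Pi.zero_apply, CharTwo.add_eq_zero]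
  simp_rw [this]
  simp [mul_comm]

/-- The uncertainty principle on `𝔽₂^d`, from
`max |F̂| ≤ |supp F| max |F|` and `2^d max |F| ≤ |supp F̂| max |F̂|`. -/
lemma uncertainty (d : ℕ) (F : (Fin d → ZMod 2) → ℝ) (hF : F ≠ 0) :
    (2 : ℝ) ^ d ≤ ((Finset.univ.filter fun b => F b ≠ 0).card : ℝ) *
      ((Finset.univ.filter fun a => hatF d F a ≠ 0).card : ℝ) := by
  have key : ∀ (G : (Fin d → ZMod 2) → ℝ) (σ : (Fin d → ZMod 2) → ℝ) (M : ℝ),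
      (∀ b, |σ b| = 1) → (∀ b, |G b| ≤ M) →
      |∑ b, G b * σ b| ≤ ((Finset.univ.filter fun b => G b ≠ 0).card : ℝ) * M := by
    intro G σ M hσ hM
    calc |∑ b, G b * σ b| ≤ ∑ b, |G b * σ b| := Finset.abs_sum_le_sum_abs _ _
      _ = ∑ b, |G b| := by simp [abs_mul, hσ]
      _ = ∑ b ∈ Finset.univ.filter (fun b => G b ≠ 0), |G b| := by
          symm
          apply Finset.sum_filter_of_ne
          intro b _ hb
          simpa using hb
      _ ≤ _ := by
          rw [← nsmul_eq_mul]
          exact Finset.sum_le_card_nsmul _ _ _ (fun b _ => hM b)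
  obtain ⟨b₀, hb₀⟩ := Finite.exists_max (fun b => |F b|)
  obtain ⟨b₁, hb₁⟩ := Function.ne_iff.mp hF
  have hpos : 0 < |F b₀| := lt_of_lt_of_le (abs_pos.mpr hb₁) (hb₀ b₁)
  have h1 : ∀ a, |hatF d F a| ≤ ((Finset.univ.filter fun b => F b ≠ 0).card : ℝ) * |F b₀| :=
    fun a => key F _ _ (fun b => abs_sgn _) hb₀
  have h2 := key (hatF d F) (fun a => sgn (∑ i, a i * b₀ i)) _ (fun b => abs_sgn _) h1
  rw [hatF_inversion, abs_mul, abs_of_pos (by positivity : (0 : ℝ) < 2 ^ d)] at h2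
  refine le_of_mul_le_mul_right (h2.trans (le_of_eq ?_)) hpos
  ring

/-! ### Fourier coefficients of restrictions -/

open Classical in
/-- `F_χ(b) = Σ_{x ∈ V_b} f(x) (-1)^{χ(x)}`. -/
noncomputable def sliceSum (n d : ℕ) (f : (Fin n → ZMod 2) → ℝ) (γ : Fin d → DualF n)
    (χ : DualF n) (b : Fin d → ZMod 2) : ℝ :=
  ∑ x ∈ Finset.univ.filter (fun x => (fun i => γ i x) = b), f x * sgn (χ x)

lemma sum_sliceSum_mul_sgn (n d : ℕ) (f : (Fin n → ZMod 2) → ℝ) (γ : Fin d → DualF n)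
    (χ : DualF n) (a : Fin d → ZMod 2) :
    hatF d (sliceSum n d f γ χ) a = 2 ^ n * fCoeff n f (χ + ∑ i, a i • γ i) := by
  classical
  unfold hatF sliceSum fCoeff
  rw [mul_inv_cancel_left₀ (by positivity)]
  rw [← Finset.sum_fiberwise Finset.univ (fun x i => γ i x)]
  refine Finset.sum_congr rfl fun b _ => ?_
  rw [Finset.sum_mul]
  refine Finset.sum_congr (by congr) fun x hx => ?_
  simp only [Finset.mem_filter, Finset.mem_univ, true_and] at hx
  subst hx
  rw [mul_assoc, ← sgn_add]
  simp [sgn]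

/-- The restriction of `χ` to `V_b` is `χ ∘ L`, with `L` the linear part of the parametrization;
the translation by `x₀` contributes the sign. -/
lemma fCoeff_comp (n d : ℕ) (f : (Fin n → ZMod 2) → ℝ) (γ : Fin d → DualF n)
    (b : Fin d → ZMod 2) (L : (Fin (n - d) → ZMod 2) →ₗ[ZMod 2] (Fin n → ZMod 2))
    (x₀ : Fin n → ZMod 2) (hinj : Function.Injective fun y => x₀ + L y)
    (hr : Set.range (fun y => x₀ + L y) = {x | ∀ i, γ i x = b i}) (χ : DualF n) :
    fCoeff (n - d) (f ∘ fun y => x₀ + L y) (χ ∘ₗ L)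
      = (2 ^ (n - d) : ℝ)⁻¹ * (sgn (χ x₀) * sliceSum n d f γ χ b) := by
  classical
  unfold fCoeff sliceSum
  congr 1
  have himg : Finset.univ.filter (fun x => (fun i => γ i x) = b)
      = Finset.univ.image (fun y => x₀ + L y) := by
    ext x
    have := Set.ext_iff.mp hr x
    simp only [Set.mem_range, Set.mem_ofPred_eq] at this
    simp only [Finset.mem_filter, Finset.mem_univ, true_and, Finset.mem_image, this]
    exact funext_iff
  have hfil : ∀ g : (Fin n → ZMod 2) → ℝ,
      ∑ x ∈ Finset.univ.filter (fun x => (fun i => γ i x) = b), g x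
        = ∑ y, g (x₀ + L y) := by
    intro g
    rw [himg, Finset.sum_image (fun _ _ _ _ h => hinj h)]
  have := hfil (fun x => f x * sgn (χ x))
  rw [show (∑ x ∈ Finset.univ.filter (fun x => (fun i => γ i x) = b), f x * sgn (χ x))
    = _ from this, Finset.mul_sum]
  refine Finset.sum_congr rfl fun y _ => ?_
  change f (x₀ + L y) * sgn (χ (L y)) = _
  have hsq : sgn (χ x₀) * sgn (χ x₀) = 1 := by
    rw [← sgn_add, CharTwo.add_self_eq_zero, sgn_zero]
  rw [map_add, sgn_add]
  linear_combination (-(f (x₀ + L y) * sgn (χ (L y)))) * hsq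

instance finite_dualF (n : ℕ) : Finite (DualF n) :=
  Finite.of_injective (fun χ : DualF n => (χ : (Fin n → ZMod 2) → ZMod 2)) DFunLike.coe_injective

/-- Forms in distinct cosets of `H` restrict to distinct forms on `V_b`, so those with
nonvanishing `F_χ(b)` contribute separately to the sparsity of the restriction. -/
lemma card_le_fSpar (n d : ℕ) (f : (Fin n → ZMod 2) → ℝ) (γ : Fin d → DualF n)
    (b : Fin d → ZMod 2) (P : (Fin (n - d) → ZMod 2) → (Fin n → ZMod 2))
    (hP : IsAffineParam n d γ b P) (T : Finset (DualF n))
    (hT : Set.InjOn (Submodule.Quotient.mk :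
      DualF n → DualF n ⧸ Submodule.span (ZMod 2) (Set.range γ)) T) :
    (T.filter fun χ => sliceSum n d f γ χ b ≠ 0).card ≤ fSpar (n - d) (f ∘ P) := by
  obtain ⟨⟨L, x₀, rfl⟩, hinj, hr⟩ := hP
  unfold fSpar
  rw [← Set.ncard_coe_finset]
  refine Set.ncard_le_ncard_of_injOn (fun χ => χ ∘ₗ L) ?_ ?_ (Set.toFinite _)
  · intro χ hχ
    simp only [Finset.coe_filter, Set.mem_ofPred_eq] at hχ
    change fCoeff _ _ _ ≠ 0
    rw [fCoeff_comp n d f γ b L x₀ hinj hr]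
    exact mul_ne_zero (by positivity) (mul_ne_zero (sgn_ne_zero _) hχ.2)
  · intro χ hχ χ' hχ' he
    simp only [Finset.coe_filter, Set.mem_ofPred_eq] at hχ hχ'
    refine hT hχ.1 hχ'.1 ((Submodule.Quotient.eq _).mpr ?_)
    apply mem_span_of_iInf_ker_le_ker
    intro v hv
    simp only [Submodule.mem_iInf, LinearMap.mem_ker] at hv
    have hx₀ : ∀ i, γ i x₀ = b i := by
      have : x₀ ∈ Set.range (fun y => x₀ + L y) := ⟨0, by simp⟩
      rw [hr] at this
      exact this
    have hmem : x₀ + v ∈ Set.range (fun y => x₀ + L y) := by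
      rw [hr]
      intro i
      simp [hv i, hx₀ i]
    obtain ⟨y, hy⟩ := hmem
    have hLy : L y = v := add_left_cancel hy
    have := LinearMap.congr_fun he y
    simp only [LinearMap.comp_apply, hLy] at this
    simp [this]

/-! ### Averaging over `b` -/

/-- With notation as before (`s ≥ 1` the sparsity of `f`, `H` the span of the linearly
independent forms `γ₁, …, γ_d`, `l` the number of cosets of `H` meeting the Fourier
support), the average over `b ∈ 𝔽₂^d` of the Fourier sparsity of the restriction of
`f` to `V_b = {x : ∀ i, γᵢ x = bᵢ}` is at least `l²/s`. -/
theorem average_restriction_sparsity (n d : ℕ) (f : (Fin n → ZMod 2) → ℝ)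
    (hf : IsBooleanFn n f) (s : ℕ) (hs : s = fSpar n f) (hs1 : 1 ≤ s)
    (γ : Fin d → DualF n) (hγ : LinearIndependent (ZMod 2) γ)
    (H : Submodule (ZMod 2) (DualF n)) (hH : H = Submodule.span (ZMod 2) (Set.range γ))
    (l : ℕ)
    (hl : l = Set.ncard ((Submodule.Quotient.mk : DualF n → DualF n ⧸ H) '' fSupp n f))
    (P : (Fin d → ZMod 2) → (Fin (n - d) → ZMod 2) → (Fin n → ZMod 2))
    (hP : ∀ b, IsAffineParam n d γ b (P b)) :
    (l : ℝ) ^ 2 / s ≤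
      (2 ^ d : ℝ)⁻¹ * ∑ b : Fin d → ZMod 2, (fSpar (n - d) (f ∘ P b) : ℝ) := by
  classical
  subst hH
  set q : DualF n → DualF n ⧸ Submodule.span (ZMod 2) (Set.range γ) := Submodule.Quotient.mk
    with hq
  have : Fintype (DualF n) := Fintype.ofFinite _
  set S : Finset (DualF n) := (fSupp n f).toFinset with hS
  have hScoe : (S : Set (DualF n)) = fSupp n f := by simp [hS]
  -- `T` is a system of representatives, inside the support, of the cosets meeting it.
  obtain ⟨T', hT'S, hbij⟩ : ∃ T' ⊆ fSupp n f, Set.BijOn q T' (q '' fSupp n f) :=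
    Set.surjOn_iff_exists_bijOn_subset.mp (Set.surjOn_image q (fSupp n f))
  set T : Finset (DualF n) := T'.toFinset with hTdef
  have hTcoe : (T : Set (DualF n)) = T' := by simp [hTdef]
  have hTinj : Set.InjOn q T := hTcoe ▸ hbij.injOn
  have hlT : l = T.card := by
    rw [hl, ← hbij.image_eq, hbij.injOn.ncard_image, ← hTcoe, Set.ncard_coe_finset]
  set c : DualF n → ℕ := fun χ => (S.filter fun χ' => q χ' = q χ).card with hc
  have hsc : s = ∑ χ ∈ T, c χ := by
    have hsS : s = S.card := by rw [hs, fSpar, ← hScoe, Set.ncard_coe_finset]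
    rw [hsS, Finset.card_eq_sum_card_fiberwise (f := q) (t := T.image q),
      Finset.sum_image hTinj]
    intro χ hχ
    rw [hScoe] at hχ
    rw [Finset.coe_image, hTcoe, hbij.image_eq]
    exact Set.mem_image_of_mem q hχ
  have hcpos : ∀ χ ∈ T, 0 < c χ := by
    intro χ hχ
    refine Finset.card_pos.mpr ⟨χ, ?_⟩
    have : χ ∈ fSupp n f := hT'S (hTcoe ▸ (Finset.mem_coe.mpr hχ))
    simpa [hS] using this
  have hunc : ∀ χ ∈ T, (2 : ℝ) ^ d / c χ ≤
      ((Finset.univ.filter fun b => sliceSum n d f γ χ b ≠ 0).card : ℝ) := by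
    intro χ hχ
    have hχS : χ ∈ fSupp n f := hT'S (hTcoe ▸ (Finset.mem_coe.mpr hχ))
    have hne : sliceSum n d f γ χ ≠ 0 := by
      intro h0
      have h := sum_sliceSum_mul_sgn n d f γ χ 0
      rw [h0] at h
      simp only [hatF, Pi.zero_apply, zero_mul, Finset.sum_const_zero, zero_smul, add_zero] at h
      exact mul_ne_zero (by positivity) hχS h.symm
    have hle : (Finset.univ.filter fun a => hatF d (sliceSum n d f γ χ) a ≠ 0).card ≤ c χ := by
      refine Finset.card_le_card_of_injOn (fun a => χ + ∑ i, a i • γ i) ?_ ?_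
      · intro a ha
        simp only [Finset.coe_filter, Finset.mem_univ, true_and, Set.mem_ofPred_eq,
          sum_sliceSum_mul_sgn] at ha
        simp only [Finset.coe_filter, Set.mem_ofPred_eq, hS, Set.mem_toFinset]
        refine ⟨right_ne_zero_of_mul ha, (Submodule.Quotient.eq _).mpr ?_⟩
        rw [add_sub_cancel_left]
        exact Submodule.sum_mem _ fun i _ =>
          Submodule.smul_mem _ _ (Submodule.subset_span ⟨i, rfl⟩)
      · intro a _ a' _ h
        exact hγ.fintypeLinearCombination_injective
          (by simpa [Fintype.linearCombination_apply] using h)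
    rw [div_le_iff₀ (by exact_mod_cast hcpos χ hχ)]
    refine (uncertainty d _ hne).trans ?_
    gcongr
  have hCS : (l : ℝ) ^ 2 / s ≤ ∑ χ ∈ T, 1 / (c χ : ℝ) := by
    have := Finset.sq_sum_div_le_sum_sq_div T (fun _ => (1 : ℝ)) (g := fun χ => (c χ : ℝ))
      (fun χ hχ => by exact_mod_cast hcpos χ hχ)
    rw [hlT, hsc]
    push_cast
    simpa using this
  refine hCS.trans ?_
  rw [inv_mul_eq_div, le_div_iff₀ (by positivity), Finset.sum_mul]
  calc ∑ χ ∈ T, 1 / (c χ : ℝ) * 2 ^ d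
      ≤ ∑ χ ∈ T, ((Finset.univ.filter fun b => sliceSum n d f γ χ b ≠ 0).card : ℝ) := by
        refine Finset.sum_le_sum fun χ hχ => ?_
        rw [one_div_mul_eq_div]
        exact hunc χ hχ
    _ = ∑ b : Fin d → ZMod 2, ((T.filter fun χ => sliceSum n d f γ χ b ≠ 0).card : ℝ) := by
        exact_mod_cast Finset.sum_card_bipartiteAbove_eq_sum_card_bipartiteBelow
          (s := T) (t := Finset.univ) (fun χ b => sliceSum n d f γ χ b ≠ 0)
    _ ≤ _ := by
        refine Finset.sum_le_sum fun b _ => ?_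
        exact_mod_cast card_le_fSpar n d f γ b (P b) (hP b) T hTinj
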